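/- arXiv:2103.10038 — 3 statements merged into one kernel-verified Lean document; each statement's English description precedes it below -/
import Mathlib

section
/- Let W be a ℂ-vector space, let λ₁, …, λ_r be distinct nonzero complex numbers, let k₁, …, k_r be positive integers, and for 1 ≤ i ≤ r and 0 ≤ j ≤ k_i − 1 let A_{ij} : W → W((z₂)) be linear maps. Then Σ_{i=1}^r Σ_{j=0}^{k_i−1} A_{ij}(z₂) · (p(z₂)∂/∂z₂)^{(j)} [ p̄(λ_i^{−1}z₁) δ(λ_i z₂/z₁) ] = 0 (meaning: for every w ∈ W and every m ∈ ℤ, the z₁^m-coefficient, which is an element of W((z₂)), vanishes) if and only if A_{ij} = 0 for all i, j. -/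
/-!
Write `K = ℂ((z₂))` and `x` for the variable of `K`. The `z₁^m`-coefficient of
`(p ∂)^j [p̄(λ⁻¹z₁) δ(λz₂/z₁)]` is `λ^{-m} x^{-m} P_j(m)`, where `P_j ∈ K[X]` has degree exactly
`j` and does not depend on `λ` or `m` (`exists_pd_iterate_polynomial`): each application of `p ∂`
to `x^{-m} P_j(m)` gives `x^{-m}` times `p · (∂P_j)(m) - p̄ · m P_j(m)`, and `p̄ ≠ 0` makes the
degree go up by exactly one.

After cancelling `x^{-m}` and testing against a `K`-linear functional on `W((z₂))`, the hypothesis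
says that an exponential polynomial `m ↦ ∑ᵢ λᵢ^{-m} Qᵢ(m)` vanishes on `ℤ`, where
`Qᵢ = ∑ⱼ cᵢⱼ P_j / j!`. Each summand is a generalized eigenvector of the shift operator on
`ℤ → K`, with pairwise distinct eigenvalues `λᵢ⁻¹`, so independence of generalized eigenspaces
gives `Qᵢ = 0` (`exp_polynomial_eq_zero`); then `cᵢⱼ = 0`, since the `P_j` have distinct degrees.
-/

noncomputable section

open HahnSeries

/-- Formal derivative `d/dx` on `ℂ((x))`. -/
def lder (f : LaurentSeries ℂ) : LaurentSeries ℂ where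
  coeff n := ((n + 1 : ℤ) : ℂ) * f.coeff (n + 1)
  isPWO_support' := by
    have hsub : (Function.support fun n : ℤ => ((n + 1 : ℤ) : ℂ) * f.coeff (n + 1)) ⊆
        (fun n : ℤ => n - 1) '' f.support := by
      intro n hn
      refine ⟨n + 1, ?_, by ring⟩
      have : f.coeff (n + 1) ≠ 0 := by
        intro h
        apply hn
        simp [Function.mem_support, h]
      simpa [HahnSeries.mem_support] using this
    exact (f.isPWO_support.image_of_monotone (fun a b hab => by simpa using hab)).mono hsub

/-- The operator `p(x) d/dx` on `ℂ((x))`. -/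
def pd (p : LaurentSeries ℂ) (f : LaurentSeries ℂ) : LaurentSeries ℂ := p * lder f

/-- The divided power `(p(x) d/dx)^{(k)} = (1/k!) (p(x)d/dx)^k`. -/
def pdPow (p : LaurentSeries ℂ) (k : ℕ) (f : LaurentSeries ℂ) : LaurentSeries ℂ :=
  ((k.factorial : ℂ))⁻¹ • (pd p)^[k] f

/-- The residue of a formal Laurent series: the coefficient of `x⁻¹`. -/
def lres (f : LaurentSeries ℂ) : ℂ := f.coeff (-1)

/-- The variable `x` of `ℂ((x))`. -/
def lx : LaurentSeries ℂ := HahnSeries.single (1 : ℤ) (1 : ℂ)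

/-- The coefficient of `z₁^m` in the formal distribution
`p̄(λ⁻¹z₁)δ(λz₂/z₁)` (where `p̄(x) = x⁻¹p(x)` and
`δ(λz₂/z₁) = Σ_{n∈ℤ} λⁿz₂ⁿz₁^{−n}`), as an element of `ℂ((z₂))`:
it equals `λ^{−m}·z₂^{−m}·p̄(z₂)`. -/
def pbarDeltaCoeff (p : LaurentSeries ℂ) (lam : ℂ) (m : ℤ) : LaurentSeries ℂ :=
  lam ^ (-m) • (HahnSeries.single (-m) (1 : ℂ) * (HahnSeries.single (-1 : ℤ) (1 : ℂ) * p))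

open Polynomial in
/-- An exponential polynomial with distinct nonzero bases that vanishes at all integers has
vanishing polynomial parts. -/
theorem exp_polynomial_eq_zero {K : Type*} [Field K] [CharZero K] {r : ℕ} (μ : Fin r → K)
    (hμ : ∀ i, μ i ≠ 0) (hinj : Function.Injective μ) (Q : Fin r → K[X])
    (h : ∀ m : ℤ, ∑ i, μ i ^ m * (Q i).eval (m : K) = 0) (i : Fin r) : Q i = 0 := by
  let S : Module.End K (ℤ → K) := LinearMap.funLeft K K (fun m : ℤ => m + 1)
  let F : Fin r → ℤ → K := fun i m => μ i ^ m * (Q i).eval (m : K)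
  -- `S - ν` acts on `m ↦ ν^m R(m)` by replacing `R` with `ν (R(X + 1) - R)`, of smaller degree.
  have key : ∀ ν : K, ν ≠ 0 → ∀ n : ℕ, ∀ R : K[X], R.degree < n →
      ((S - ν • (1 : Module.End K (ℤ → K))) ^ n) (fun m : ℤ => ν ^ m * R.eval (m : K)) = 0 := by
    intro ν hν n
    induction n with
    | zero =>
      intro R hR
      have : R = 0 := by
        rw [← degree_eq_bot]
        exact Nat.WithBot.lt_zero_iff.mp (by simpa using hR)
      subst this
      ext m
      simp
    | succ n ih =>
      intro R hR
      have hstep : (S - ν • (1 : Module.End K (ℤ → K))) (fun m : ℤ => ν ^ m * R.eval (m : K))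
          = fun m : ℤ => ν ^ m * (C ν * (taylor 1 R - R)).eval (m : K) := by
        ext m
        simp only [S, LinearMap.sub_apply, LinearMap.smul_apply, Module.End.one_apply,
          Pi.sub_apply, Pi.smul_apply, LinearMap.funLeft_apply, smul_eq_mul, eval_mul, eval_C,
          eval_sub, taylor_eval, zpow_add_one₀ hν]
        push_cast
        ring
      rw [pow_succ, Module.End.mul_apply, hstep]
      apply ih
      by_cases hR0 : R = 0
      · simp [hR0]
      · have h1 : (taylor 1 R - R).degree < R.degree :=
          degree_sub_lt_right (degree_taylor R 1) hR0 (leadingCoeff_taylor 1 R)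
        rw [degree_C_mul hν]
        refine lt_of_lt_of_le h1 ?_
        exact Order.lt_succ_iff.mp hR
  have hF : ∀ i, F i ∈ S.maxGenEigenspace (μ i) := by
    intro i
    rw [Module.End.mem_maxGenEigenspace]
    refine ⟨(Q i).natDegree + 1, key (μ i) (hμ i) _ _ ?_⟩
    exact lt_of_le_of_lt degree_le_natDegree (by exact_mod_cast Nat.lt_succ_self _)
  have hind := (S.independent_maxGenEigenspace).comp hinj
  have hzero : F i = 0 := by
    refine (iSupIndep_iff_finsetSum_eq_zero_imp_eq_zero _).mp hind Finset.univ F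
      (fun i _ => hF i) ?_ i (Finset.mem_univ i)
    ext m
    simpa [F] using h m
  refine eq_zero_of_infinite_isRoot _ (Set.Infinite.mono ?_
    (Set.infinite_range_of_injective (Int.cast_injective (α := K))))
  rintro _ ⟨m, rfl⟩
  have := congrFun hzero m
  simpa [F, hμ i, zpow_ne_zero] using this

/-- `d/dx` as a `ℂ`-linear map. -/
def lderLin : LaurentSeries ℂ →ₗ[ℂ] LaurentSeries ℂ where
  toFun := lder
  map_add' f g := by ext n; simp [lder, mul_add]
  map_smul' c f := by ext n; simp [lder]; ring

theorem lder_single_mul (n : ℤ) (f : LaurentSeries ℂ) :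
    lder (single n (1 : ℂ) * f) =
      single n (1 : ℂ) * (lder f + (n : LaurentSeries ℂ) * (single (-1 : ℤ) (1 : ℂ) * f)) := by
  ext a
  have h : ((n : LaurentSeries ℂ) * (single (-1 : ℤ) (1 : ℂ) * f))
      = (n : ℂ) • (single (-1 : ℤ) (1 : ℂ) * f) := by
    rw [← zsmul_eq_mul, ← C_mul_eq_smul, zsmul_eq_mul, map_intCast]
  rw [h]
  simp only [lder, coeff_single_mul, HahnSeries.coeff_add, HahnSeries.coeff_smul, one_mul,
    smul_eq_mul]
  rw [show a + 1 - n = a - n + 1 by ring, show a - n - -1 = a - n + 1 by ring]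
  push_cast
  ring

open Polynomial in
/-- Differentiating the coefficients of a polynomial over `ℂ((x))` commutes with evaluation at
integers, as these are constants. -/
theorem exists_lder_eval (Q : (LaurentSeries ℂ)[X]) :
    ∃ Q' : (LaurentSeries ℂ)[X], Q'.degree ≤ Q.degree ∧
      ∀ m : ℤ, lder (Q.eval (m : LaurentSeries ℂ)) = Q'.eval (m : LaurentSeries ℂ) := by
  refine ⟨∑ n ∈ Q.support, monomial n (lder (Q.coeff n)), ?_, fun m => ?_⟩
  · refine (degree_sum_le _ _).trans (Finset.sup_le fun n hn => ?_)
    exact (degree_monomial_le _ _).trans (le_degree_of_mem_supp _ hn)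
  · rw [eval_eq_sum, Polynomial.sum]
    change lderLin _ = _
    rw [map_sum, eval_finsetSum]
    refine Finset.sum_congr rfl fun n _ => ?_
    have h : ∀ f : LaurentSeries ℂ, f * (m : LaurentSeries ℂ) ^ n = (m ^ n : ℤ) • f := by
      intro f
      rw [zsmul_eq_mul]; push_cast; ring
    rw [eval_monomial, h, h, map_zsmul]
    rfl

open Polynomial in
/-- `(p d/dx)^j (x^{-m} p̄) = x^{-m} P_j(m)` with `P_j` of degree exactly `j`, independent of
`m`. -/
theorem exists_pd_iterate_polynomial (p : LaurentSeries ℂ) (hp : p ≠ 0) (j : ℕ) :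
    ∃ P : (LaurentSeries ℂ)[X], P.degree = j ∧ ∀ m : ℤ,
      (pd p)^[j] (single (-m) (1 : ℂ) * (single (-1 : ℤ) (1 : ℂ) * p)) =
        single (-m) (1 : ℂ) * P.eval (m : LaurentSeries ℂ) := by
  have hpbar : single (-1 : ℤ) (1 : ℂ) * p ≠ 0 :=
    mul_ne_zero (single_ne_zero one_ne_zero) hp
  induction j with
  | zero => exact ⟨C (single (-1 : ℤ) (1 : ℂ) * p), by simpa using degree_C hpbar, by simp⟩
  | succ j ih =>
    obtain ⟨P, hdeg, hP⟩ := ih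
    obtain ⟨P', hdeg', hP'⟩ := exists_lder_eval P
    have hX : (C (single (-1 : ℤ) (1 : ℂ) * p) * (X * P)).degree = ((j + 1 : ℕ) : WithBot ℕ) := by
      rw [degree_C_mul hpbar, degree_mul, degree_X, hdeg]
      push_cast
      ring
    refine ⟨C p * P' - C (single (-1 : ℤ) (1 : ℂ) * p) * (X * P), ?_, fun m => ?_⟩
    · rw [degree_sub_eq_right_of_degree_lt, hX]
      rw [hX, degree_C_mul hp]
      refine lt_of_le_of_lt hdeg' ?_
      rw [hdeg]
      exact_mod_cast Nat.lt_succ_self j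
    · rw [Function.iterate_succ_apply', hP, pd, lder_single_mul, hP']
      simp only [eval_sub, eval_mul, eval_C, eval_X]
      push_cast
      ring

theorem pd_smul (p : LaurentSeries ℂ) (c : ℂ) (f : LaurentSeries ℂ) :
    pd p (c • f) = c • pd p f := by
  have h : lder (c • f) = c • lder f := map_smul lderLin c f
  rw [pd, h, pd, ← C_mul_eq_smul, ← C_mul_eq_smul]
  ring

theorem pd_iterate_smul (p : LaurentSeries ℂ) (c : ℂ) (j : ℕ) (f : LaurentSeries ℂ) :
    (pd p)^[j] (c • f) = c • (pd p)^[j] f :=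
  (Function.Commute.iterate_left (f := pd p) (g := fun f => c • f) (pd_smul p c) j) f

/-- Lemma 2.3: for distinct nonzero `λ₁,…,λ_r`, positive integers
`k₁,…,k_r` and linear maps `A_{ij} : W → W((z₂))`, the distribution identity
`Σᵢ Σ_{j<kᵢ} A_{ij}(z₂)(p(z₂)∂/∂z₂)^{(j)} [p̄(λᵢ⁻¹z₁)δ(λᵢz₂/z₁)] = 0`
(meaning every `z₁^m`-coefficient applied to every `w ∈ W` vanishes in `W((z₂))`)
holds if and only if all `A_{ij} = 0`. -/
theorem sum_delta_vanishes_iff (p : LaurentSeries ℂ) (hp : p ≠ 0)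
    (W : Type*) [AddCommGroup W] [Module ℂ W]
    (r : ℕ) (lam : Fin r → ℂ) (hne : ∀ i, lam i ≠ 0) (hinj : Function.Injective lam)
    (k : Fin r → ℕ) (hk : ∀ i, 0 < k i)
    (A : Fin r → ℕ → (W →ₗ[ℂ] HahnModule ℤ ℂ W)) :
    (∀ (w : W) (m : ℤ),
        ∑ i : Fin r, ∑ j ∈ Finset.range (k i),
          pdPow p j (pbarDeltaCoeff p (lam i) m) • A i j w = 0)
      ↔ (∀ i : Fin r, ∀ j < k i, A i j = 0) := by
  constructor
  swap
  · intro h w m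
    refine Finset.sum_eq_zero fun i _ => Finset.sum_eq_zero fun j hj => ?_
    rw [h i j (Finset.mem_range.mp hj)]
    simp
  intro h i₀ j₀ hj₀
  choose P hdeg hP using exists_pd_iterate_polynomial p hp
  have : CharZero (LaurentSeries ℂ) :=
    charZero_of_injective_ringHom (C_injective (Γ := ℤ) (R := ℂ))
  let c : ℕ → LaurentSeries ℂ := fun j => HahnSeries.C ((j.factorial : ℂ)⁻¹)
  have hc : ∀ j, c j ≠ 0 := fun j => by
    exact C_ne_zero (inv_ne_zero (by exact_mod_cast j.factorial_ne_zero))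
  let μ : Fin r → LaurentSeries ℂ := fun i => HahnSeries.C (lam i)⁻¹
  have hμ : ∀ i, μ i ≠ 0 := fun i => by exact C_ne_zero (inv_ne_zero (hne i))
  have hμinj : Function.Injective μ := fun a b hab =>
    hinj (inv_injective (C_injective hab))
  have hcoeff : ∀ i j (m : ℤ), pdPow p j (pbarDeltaCoeff p (lam i) m) =
      single (-m) (1 : ℂ) * (μ i ^ m * (c j * (P j).eval (m : LaurentSeries ℂ))) := by
    intro i j m
    have hpow : μ i ^ m = HahnSeries.C (lam i ^ (-m)) := by
      simp only [μ]
      rw [← map_zpow₀, inv_zpow, zpow_neg]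
    rw [pdPow, pbarDeltaCoeff, pd_iterate_smul, hP, ← C_mul_eq_smul, ← C_mul_eq_smul, hpow]
    ring
  ext1 w
  rw [LinearMap.zero_apply, ← Module.forall_dual_apply_eq_zero_iff (LaurentSeries ℂ)]
  intro φ
  let Q : Fin r → Polynomial (LaurentSeries ℂ) := fun i =>
    ∑ j ∈ Finset.range (k i), (c j * φ (A i j w)) • P j
  have hQ : Q i₀ = 0 := by
    refine exp_polynomial_eq_zero μ hμ hμinj Q (fun m => ?_) i₀
    have h1 := congrArg φ (h w m)
    have hs : (single (-m) (1 : ℂ) : LaurentSeries ℂ) ≠ 0 := single_ne_zero one_ne_zero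
    refine (mul_eq_zero.mp (Eq.trans ?_ (h1.trans (map_zero φ)))).resolve_left hs
    simp only [map_sum, map_smul, smul_eq_mul, hcoeff, Q, Polynomial.eval_finsetSum,
      Polynomial.eval_smul, Finset.mul_sum]
    refine Finset.sum_congr rfl fun i _ => Finset.sum_congr rfl fun j _ => ?_
    ring
  let T : Polynomial.Sequence (LaurentSeries ℂ) := ⟨P, hdeg⟩
  have h2 := linearIndependent_iff'.mp T.linearIndependent (Finset.range (k i₀))
    (fun j => c j * φ (A i₀ j w)) hQ j₀ (Finset.mem_range.mpr hj₀)
  exact (mul_eq_zero.mp h2).resolve_left (hc j₀)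
end
end

section
/- Let W be a ℂ-vector space, let a(z) = Σ_{n∈ℤ} aₙz^{−n−1} and b(z) = Σ_{n∈ℤ} bₙz^{−n−1} be fields on W, and let q(z) = (z−λ₁)^{k₁}⋯(z−λ_r)^{k_r} where λ₁, …, λ_r are distinct nonzero complex numbers and k₁, …, k_r are positive integers. Then q(z₁/z₂)·[a(z₁), b(z₂)] = 0 if and only if there exist fields A_{ij}(z) on W (1 ≤ i ≤ r, 0 ≤ j ≤ k_i−1) such that [a(z₁), b(z₂)] = Σ_{i=1}^r Σ_{j=0}^{k_i−1} A_{ij}(z₂) (p(z₂)∂/∂z₂)^{(j)} [ p̄(λ_i^{−1}z₁) δ(λ_i z₂/z₁) ]; moreover the A_{ij} are uniquely determined by this identity. -/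
/-!
A field on `W` is the same as a linear map `W → W((z))`, so the fields form a vector space `M`
over `K = ℂ((z))`, and the commutator `[a(z₁), b(z₂)]` is the sequence `D : ℤ → M` of its
coefficients of `z₁^{-m-1}`, with `z = z₂`. Multiplication by `z₁/z₂` becomes the twisted shift
`(T f)(m) = z⁻¹ f(m + 1)`, hence locality says `q(T) D = 0` (`locality_iff`).

By primary decomposition (`exists_primary_sum`, `primary_sum_eq_zero`) the kernel of `q(T)` is the
direct sum of the kernels of `(T - λᵢ)^{kᵢ}`. The kernel of `T - λ` consists of the multiples of the
geometric sequence `(λz)^m` (`eq_outer_of_shiftSub_eq_zero`). Therefore, if `e₀, e₁, …` are scalar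
sequences for which `(T - λ)^j eⱼ` is a nonzero `K`-multiple of `(λz)^m`, then every sequence in the
kernel of `(T - λ)^k` is uniquely `Σ_{j<k} eⱼ Aⱼ` with `Aⱼ ∈ M`, by induction on `k`
(`IsJordanChain.exists_expansion`, `IsJordanChain.eq_zero`).

The coefficient sequences of `(p∂)^{(j)}[p̄(λ⁻¹z₁)δ(λz₂/z₁)]` form such a chain
(`isJordanChain_deltaSeq`): for `j = 0` the sequence is `λp (λz)^m`, and `[T, p∂] = p̄ T` gives
`[(T - λ)^{n+1}, p∂] = (n + 1) p̄ T (T - λ)^n`, so that each `p∂` multiplies the top coefficient by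
the nonzero factor `(n + 1) λ p̄`.
-/

noncomputable section

open HahnSeries

open Polynomial in
/-- The polynomial `q(z) = (z−λ₁)^{k₁}⋯(z−λ_r)^{k_r}`. -/
def qpoly (r : ℕ) (lam : Fin r → ℂ) (k : Fin r → ℕ) : Polynomial ℂ :=
  ∏ i : Fin r, (Polynomial.X - Polynomial.C (lam i)) ^ (k i)

/-- A field on `W`: a series `a(z) = Σ aₙ z^{−n−1}` of endomorphisms such that
`aₙw = 0` for `n` sufficiently large, for every `w`. -/
def IsFieldOn (W : Type*) [AddCommGroup W] [Module ℂ W] (a : ℤ → Module.End ℂ W) : Prop :=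
  ∀ w : W, ∃ N : ℤ, ∀ n ≥ N, a n w = 0

/-- The identity
`[a(z₁),b(z₂)] = Σᵢ Σ_{j<kᵢ} A_{ij}(z₂)(p(z₂)∂/∂z₂)^{(j)}[p̄(λᵢ⁻¹z₁)δ(λᵢz₂/z₁)]`,
written out on the coefficient of `z₁^{−m−1}z₂^{−n−1}` applied to `w ∈ W`:
the right-hand side `z₂`-coefficient is the (finite) convolution
`Σ_s ((p∂)^{(j)}[p̄δ]_λᵢ(−m−1))_s · (A_{ij})_{n+s} w`. -/
def CommutatorIdentity (W : Type*) [AddCommGroup W] [Module ℂ W]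
    (p : LaurentSeries ℂ) (r : ℕ) (lam : Fin r → ℂ) (k : Fin r → ℕ)
    (a b : ℤ → Module.End ℂ W) (A : Fin r → ℕ → ℤ → Module.End ℂ W) : Prop :=
  ∀ (m n : ℤ) (w : W),
    (a m * b n - b n * a m) w
      = ∑ i : Fin r, ∑ j ∈ Finset.range (k i),
          ∑ᶠ s : ℤ, ((pdPow p j (pbarDeltaCoeff p (lam i) (-m - 1))).coeff s) •
            (A i j (n + s)) w

/-! ### The twisted shift on sequences -/

section Abstract

variable {K : Type*} [Field K] [Algebra ℂ K]
variable {M : Type*} [AddCommGroup M] [Module K M] [Module ℂ M] [IsScalarTower ℂ K M]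

/-- The twisted shift `(T f)(m) = z⁻¹ • f(m + 1)` on sequences `ℤ → M`. On the sequence of
coefficients of `z₁^{-m-1}` it is multiplication by `z₁/z₂` when `z = z₂`. -/
def twShift (M : Type*) [AddCommGroup M] [Module K M] [Module ℂ M] [IsScalarTower ℂ K M]
    (z : K) : Module.End ℂ (ℤ → M) where
  toFun f m := z⁻¹ • f (m + 1)
  map_add' f g := by ext m; simp
  map_smul' c f := by ext m; simp [smul_algebra_smul_comm]

/-- `T - λ` for the twisted shift `T`. -/
def shiftSub (M : Type*) [AddCommGroup M] [Module K M] [Module ℂ M] [IsScalarTower ℂ K M]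
    (z : K) (l : ℂ) : Module.End ℂ (ℤ → M) := twShift M z - l • 1

/-- The sequence `m ↦ e(m) • x` for a scalar sequence `e` and a vector `x`. -/
def outer (e : ℤ → K) (x : M) : ℤ → M := fun m => e m • x

lemma twShift_apply (z : K) (f : ℤ → M) (m : ℤ) : twShift M z f m = z⁻¹ • f (m + 1) := rfl

lemma shiftSub_apply (z : K) (l : ℂ) (f : ℤ → M) (m : ℤ) :
    shiftSub M z l f m = z⁻¹ • f (m + 1) - l • f m := rfl

lemma shiftSub_pow_outer (z : K) (l : ℂ) (n : ℕ) (e : ℤ → K) (x : M) :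
    ((shiftSub M z l) ^ n) (outer e x) = outer (((shiftSub K z l) ^ n) e) x := by
  induction n generalizing e with
  | zero => rfl
  | succ n ih =>
    rw [pow_succ, pow_succ, Module.End.mul_apply, Module.End.mul_apply, ← ih]
    congr 1
    ext m
    simp [shiftSub_apply, outer, sub_smul, mul_smul]

lemma shiftSub_pow_smul (z : K) (l : ℂ) (n : ℕ) (c : K) (f : ℤ → K) :
    ((shiftSub K z l) ^ n) (c • f) = c • ((shiftSub K z l) ^ n) f := by
  have h : c • f = outer f c := by ext m; simp [outer, mul_comm]
  rw [h, shiftSub_pow_outer]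
  ext m; simp [outer, mul_comm]

/-- The geometric sequence `m ↦ (λ z)^m`, the eigenvector of the twisted shift for `λ`. -/
def geom (z : K) (l : ℂ) : ℤ → K := fun m => (algebraMap ℂ K l * z) ^ m

lemma shiftSub_geom (z : K) (hz : z ≠ 0) (l : ℂ) (hl : l ≠ 0) :
    shiftSub K z l (geom z l) = 0 := by
  have h : algebraMap ℂ K l * z ≠ 0 := mul_ne_zero (by simpa using hl) hz
  ext m
  rw [shiftSub_apply, geom, geom, zpow_add_one₀ h, Algebra.smul_def l, smul_eq_mul, Pi.zero_apply]
  field_simp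
  ring

/-- The kernel of `T - λ` consists of the multiples of the geometric sequence. -/
lemma eq_outer_of_shiftSub_eq_zero (z : K) (hz : z ≠ 0) (l : ℂ) (hl : l ≠ 0) (f : ℤ → M)
    (hf : shiftSub M z l f = 0) : f = outer (geom z l) (f 0) := by
  have h : algebraMap ℂ K l * z ≠ 0 := mul_ne_zero (by simpa using hl) hz
  have step (m : ℤ) : f (m + 1) = (algebraMap ℂ K l * z) • f m := by
    have := congrFun hf m
    rw [shiftSub_apply, Pi.zero_apply, sub_eq_zero, inv_smul_eq_iff₀ hz] at this
    rw [this, mul_comm, mul_smul, algebraMap_smul]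
  ext m
  unfold outer geom
  induction m using Int.induction_on with
  | zero => simp
  | succ n ih => rw [step, ih, smul_smul, zpow_add_one₀ h, mul_comm]
  | pred n ih =>
    have := step (-n - 1)
    rw [sub_add_cancel] at this
    rw [zpow_sub_one₀ h, mul_comm, mul_smul, ← ih, this, inv_smul_smul₀ h]

/-- A sequence `e₀, e₁, …` of scalar sequences which behaves like a Jordan chain for `T` at the
eigenvalue `λ`, up to lower terms and scaling by `K`: `(T - λ)^j eⱼ` is a nonzero multiple of the geometric sequence. -/
def IsJordanChain (z : K) (l : ℂ) (e : ℕ → ℤ → K) : Prop :=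
  ∀ j, ∃ c : K, c ≠ 0 ∧ ((shiftSub K z l) ^ j) (e j) = c • geom z l

section Single

variable {z : K} {l : ℂ} {e : ℕ → ℤ → K}

lemma IsJordanChain.pow_eq_zero (he : IsJordanChain z l e) (hz : z ≠ 0) (hl : l ≠ 0) {j k : ℕ} (hjk : j < k)
    (x : M) : ((shiftSub M z l) ^ k) (outer (e j) x) = 0 := by
  obtain ⟨c, -, h⟩ := he j
  obtain ⟨d, rfl⟩ := Nat.exists_eq_add_of_lt hjk
  rw [shiftSub_pow_outer, show j + d + 1 = d + 1 + j by ring, _root_.pow_add, pow_succ,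
    Module.End.mul_apply, Module.End.mul_apply, h]
  have := shiftSub_pow_smul z l 1 c (geom z l)
  rw [pow_one] at this
  rw [this, shiftSub_geom z hz l hl]
  ext m; simp [outer]

lemma IsJordanChain.pow_sum_eq_zero (he : IsJordanChain z l e) (hz : z ≠ 0) (hl : l ≠ 0) (k : ℕ)
    (A : ℕ → M) : ((shiftSub M z l) ^ k) (∑ j ∈ Finset.range k, outer (e j) (A j)) = 0 := by
  rw [map_sum]
  exact Finset.sum_eq_zero fun j hj => he.pow_eq_zero hz hl (Finset.mem_range.1 hj) _

/-- Subtracting from `f` the multiple of `e_{k-1}` with the same image under `(T - λ)^(k-1)`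
lowers `k`, so sequences killed by `(T - λ)^k` are spanned by `e₀, …, e_{k-1}` over `M`. -/
lemma IsJordanChain.exists_expansion (he : IsJordanChain z l e) (hz : z ≠ 0) (hl : l ≠ 0) (k : ℕ)
    (f : ℤ → M) (hf : ((shiftSub M z l) ^ k) f = 0) :
    ∃ A : ℕ → M, f = ∑ j ∈ Finset.range k, outer (e j) (A j) := by
  induction k generalizing f with
  | zero => exact ⟨0, by simpa using hf⟩
  | succ k ih =>
    obtain ⟨c, hc, h⟩ := he k
    rw [pow_succ', Module.End.mul_apply] at hf
    have h1 := eq_outer_of_shiftSub_eq_zero z hz l hl _ hf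
    set y := ((shiftSub M z l) ^ k) f 0
    obtain ⟨A, hA⟩ := ih (f - outer (e k) (c⁻¹ • y)) (by
      rw [map_sub, h1, shiftSub_pow_outer, h, sub_eq_zero]
      ext m
      simp only [outer, Pi.smul_apply, smul_eq_mul, smul_smul]
      congr 1
      field_simp)
    refine ⟨Function.update A k (c⁻¹ • y), ?_⟩
    rw [Finset.sum_range_succ, Function.update_self, ← sub_eq_iff_eq_add, hA]
    refine Finset.sum_congr rfl fun j hj => ?_
    rw [Function.update_of_ne (Finset.mem_range.1 hj).ne]

/-- Applying `(T - λ)^(k-1)` isolates the top coefficient, so the expansion is unique. -/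
lemma IsJordanChain.eq_zero (he : IsJordanChain z l e) (hz : z ≠ 0) (hl : l ≠ 0) (k : ℕ)
    (A : ℕ → M) (hA : ∑ j ∈ Finset.range k, outer (e j) (A j) = 0) : ∀ j < k, A j = 0 := by
  induction k with
  | zero => intro j hj; omega
  | succ k ih =>
    obtain ⟨c, hc, h⟩ := he k
    have hk : A k = 0 := by
      have h2 := congrArg ((shiftSub M z l) ^ k) hA
      rw [Finset.sum_range_succ, map_add, he.pow_sum_eq_zero hz hl, shiftSub_pow_outer, h,
        map_zero, zero_add] at h2
      have := congrFun h2 0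
      simpa [outer, geom, hc] using this
    rw [Finset.sum_range_succ, hk] at hA
    have h3 : outer (e k) (0 : M) = 0 := by ext m; simp [outer]
    rw [h3, add_zero] at hA
    intro j hj
    rcases Nat.lt_succ_iff_lt_or_eq.1 hj with h4 | rfl
    · exact ih hA j h4
    · exact hk

end Single

/-! ### Primary decomposition -/

section Multi

open Polynomial

lemma aeval_factor {V : Type*} [AddCommGroup V] [Module ℂ V] (T : Module.End ℂ V) (l : ℂ) (k : ℕ) :
    aeval T ((X - Polynomial.C l) ^ k) = (T - l • 1) ^ k := by
  simp [Algebra.smul_def]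

/-- Primary decomposition of the kernel of a product of powers of distinct linear factors. -/
lemma exists_primary_sum {V : Type*} [AddCommGroup V] [Module ℂ V] (T : Module.End ℂ V)
    {ι : Type*} (s : Finset ι) (lam : ι → ℂ) (hinj : Function.Injective lam) (k : ι → ℕ) (f : V)
    (hf : aeval T (∏ i ∈ s, (X - Polynomial.C (lam i)) ^ k i) f = 0) :
    ∃ g : ι → V, (∀ i, ((T - lam i • 1) ^ k i) (g i) = 0) ∧ f = ∑ i ∈ s, g i := by
  classical
  induction s using Finset.induction_on generalizing f with
  | empty => exact ⟨0, by simp, by simpa using hf⟩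
  | insert i s hi ih =>
    rw [Finset.prod_insert hi] at hf
    have hcop : IsCoprime ((X - Polynomial.C (lam i)) ^ k i) (∏ i ∈ s, (X - Polynomial.C (lam i)) ^ k i) := by
      refine IsCoprime.prod_right fun j hj => IsCoprime.pow ?_
      refine isCoprime_X_sub_C_of_isUnit_sub ?_
      rw [isUnit_iff_ne_zero, sub_ne_zero]
      exact fun h => hi (hinj h ▸ hj)
    have hmem : f ∈ LinearMap.ker (aeval T ((X - Polynomial.C (lam i)) ^ k i)) ⊔
        LinearMap.ker (aeval T (∏ i ∈ s, (X - Polynomial.C (lam i)) ^ k i)) := by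
      rw [sup_ker_aeval_eq_ker_aeval_mul_of_coprime T hcop]
      exact hf
    obtain ⟨u, hu, v, hv, rfl⟩ := Submodule.mem_sup.1 hmem
    obtain ⟨g, hg, rfl⟩ := ih v hv
    rw [LinearMap.mem_ker, aeval_factor] at hu
    refine ⟨Function.update g i u, fun j => ?_, ?_⟩
    · by_cases h : j = i
      · subst h; simpa using hu
      · simpa [h] using hg j
    · rw [Finset.sum_insert hi, Function.update_self]
      congr 1
      refine Finset.sum_congr rfl fun j hj => ?_
      rw [Function.update_of_ne]
      rintro rfl
      exact hi hj

lemma aeval_primary_sum {V : Type*} [AddCommGroup V] [Module ℂ V] (T : Module.End ℂ V)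
    {ι : Type*} (s : Finset ι) (lam : ι → ℂ) (k : ι → ℕ)
    (g : ι → V) (hg : ∀ i, ((T - lam i • 1) ^ k i) (g i) = 0) :
    aeval T (∏ i ∈ s, (X - Polynomial.C (lam i)) ^ k i) (∑ i ∈ s, g i) = 0 := by
  rw [map_sum]
  refine Finset.sum_eq_zero fun i hi => ?_
  obtain ⟨u, hu⟩ := Finset.dvd_prod_of_mem (fun i => (X - Polynomial.C (lam i)) ^ k i) hi
  rw [hu, mul_comm, map_mul, Module.End.mul_apply, aeval_factor, hg, map_zero]

/-- Generalized eigenspaces for distinct eigenvalues are independent. -/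
lemma primary_sum_eq_zero {V : Type*} [AddCommGroup V] [Module ℂ V] (T : Module.End ℂ V)
    {ι : Type*} (s : Finset ι) (lam : ι → ℂ) (hinj : Function.Injective lam) (k : ι → ℕ)
    (g : ι → V) (hg : ∀ i, ((T - lam i • 1) ^ k i) (g i) = 0) (hsum : ∑ i ∈ s, g i = 0) :
    ∀ i ∈ s, g i = 0 := by
  have hind := (T.independent_maxGenEigenspace).comp hinj
  rw [iSupIndep_iff_finsetSum_eq_zero_imp_eq_zero] at hind
  exact hind s g (fun i _ => (Module.End.mem_maxGenEigenspace T (lam i) (g i)).2 ⟨k i, hg i⟩) hsum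

end Multi

end Abstract

/-- The coefficientwise `ℂ`-algebra structure on `ℂ((x))`. Declared here so that it takes precedence
over the one passing through power series, which is not definitionally compatible with the
coefficientwise scalar multiplication. -/
instance laurentAlgebra : Algebra ℂ (LaurentSeries ℂ) := HahnSeries.instAlgebra

/-! ### Iterated `p∂` of the delta function is a Jordan chain -/

section Jordan

lemma lder_add (f g : LaurentSeries ℂ) : lder (f + g) = lder f + lder g := by
  ext n; simp [lder, mul_add]

lemma lder_smul (c : ℂ) (f : LaurentSeries ℂ) : lder (c • f) = c • lder f := by
  ext n; simp [lder, mul_left_comm]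

lemma csmul_eq_mul (c : ℂ) (f : LaurentSeries ℂ) :
    c • f = algebraMap ℂ (LaurentSeries ℂ) c * f :=
  Algebra.smul_def c f

lemma lx_ne_zero : lx ≠ 0 := by simp [lx]

lemma lx_inv : lx⁻¹ = HahnSeries.single (-1 : ℤ) (1 : ℂ) := by
  simp [lx, HahnSeries.inv_single]

lemma coeff_lx_inv_mul (f : LaurentSeries ℂ) (n : ℤ) : (lx⁻¹ * f).coeff n = f.coeff (n + 1) := by
  have := HahnSeries.coeff_single_mul_add (r := (1 : ℂ)) (x := f) (a := n + 1) (b := -1)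
  rw [lx_inv]
  simpa using this

lemma lder_lx_inv_mul (f : LaurentSeries ℂ) :
    lder (lx⁻¹ * f) = lx⁻¹ * lder f - lx⁻¹ * (lx⁻¹ * f) := by
  ext n
  rw [HahnSeries.coeff_sub, coeff_lx_inv_mul, coeff_lx_inv_mul, coeff_lx_inv_mul]
  simp only [lder, coeff_lx_inv_mul]
  push_cast
  ring

/-- The operator `p(z₂)∂/∂z₂`, applied to every term of a sequence of Laurent series. -/
def pdEnd (p : LaurentSeries ℂ) : Module.End ℂ (ℤ → LaurentSeries ℂ) where
  toFun f m := pd p (f m)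
  map_add' f g := by ext1 m; simp [pd, lder_add, mul_add]
  map_smul' c f := by
    ext1 m
    simp only [pd, Pi.smul_apply, lder_smul, RingHom.id_apply]
    rw [csmul_eq_mul, csmul_eq_mul, mul_left_comm]

lemma pdEnd_apply (p : LaurentSeries ℂ) (f : ℤ → LaurentSeries ℂ) (m : ℤ) :
    pdEnd p f m = p * lder (f m) := rfl

/-- The commutation relation `[T, p∂] = p̄ T`. -/
lemma shiftSub_pdEnd (p : LaurentSeries ℂ) (l : ℂ) (f : ℤ → LaurentSeries ℂ) :
    shiftSub (LaurentSeries ℂ) lx l (pdEnd p f) =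
      pdEnd p (shiftSub (LaurentSeries ℂ) lx l f) +
        (lx⁻¹ * p) • (shiftSub (LaurentSeries ℂ) lx l f + l • f) := by
  have h1 : shiftSub (LaurentSeries ℂ) lx l f = twShift _ lx f - l • f := rfl
  have h2 : shiftSub (LaurentSeries ℂ) lx l (pdEnd p f) =
    twShift _ lx (pdEnd p f) - l • pdEnd p f := rfl
  rw [h1, h2, map_sub, map_smul, sub_add_cancel, sub_add_eq_add_sub]
  congr 1
  ext1 m
  simp only [twShift_apply, pdEnd_apply, Pi.add_apply, Pi.smul_apply, smul_eq_mul, lder_lx_inv_mul]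
  ring

/-- Iterating `[T - λ, p∂] = p̄ T`: as `T - λ` commutes with `p̄`,
`[(T - λ)^(n+1), p∂] = (n + 1) p̄ T (T - λ)^n`, where `T = (T - λ) + λ`. -/
lemma shiftSub_pow_pdEnd (p : LaurentSeries ℂ) (l : ℂ) (n : ℕ) (f : ℤ → LaurentSeries ℂ) :
    ((shiftSub (LaurentSeries ℂ) lx l) ^ (n + 1)) (pdEnd p f) =
      pdEnd p (((shiftSub (LaurentSeries ℂ) lx l) ^ (n + 1)) f) +
        ((n + 1 : LaurentSeries ℂ) * (lx⁻¹ * p)) •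
          (((shiftSub (LaurentSeries ℂ) lx l) ^ (n + 1)) f +
            l • ((shiftSub (LaurentSeries ℂ) lx l) ^ n) f) := by
  induction n with
  | zero => simpa using shiftSub_pdEnd p l f
  | succ n ih =>
    have hsm (c : LaurentSeries ℂ) (g) := shiftSub_pow_smul lx l 1 c g
    rw [pow_one] at hsm
    rw [pow_succ', Module.End.mul_apply, ih, map_add, shiftSub_pdEnd, hsm, map_add, map_smul]
    simp only [← Module.End.mul_apply, ← pow_succ']
    rw [add_assoc]
    congr 1
    ext1 m
    simp only [Pi.add_apply, Pi.smul_apply, smul_eq_mul]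
    push_cast
    ring

/-- The sequence, in `m`, of the coefficients of `z₁^{-m-1}` in
`(p(z₂)∂/∂z₂)^{(j)}[p̄(λ⁻¹z₁)δ(λz₂/z₁)]`. -/
def deltaSeq (p : LaurentSeries ℂ) (l : ℂ) (j : ℕ) : ℤ → LaurentSeries ℂ :=
  fun m => pdPow p j (pbarDeltaCoeff p l (-m - 1))

lemma deltaSeq_eq (p : LaurentSeries ℂ) (l : ℂ) (j : ℕ) :
    deltaSeq p l j = ((j.factorial : ℂ))⁻¹ • ((pdEnd p) ^ j) (fun m => pbarDeltaCoeff p l (-m - 1)) := by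
  have h : ∀ (j : ℕ) (f : ℤ → LaurentSeries ℂ) (m : ℤ), ((pdEnd p) ^ j) f m = (pd p)^[j] (f m) := by
    intro j
    induction j with
    | zero => intro f m; rfl
    | succ j ih =>
      intro f m
      rw [pow_succ, Module.End.mul_apply, ih, Function.iterate_succ_apply]
      rfl
  ext1 m
  rw [Pi.smul_apply, h]
  rfl

lemma pbarDeltaCoeff_eq_geom (p : LaurentSeries ℂ) (l : ℂ) (hl : l ≠ 0) :
    (fun m => pbarDeltaCoeff p l (-m - 1)) = (algebraMap ℂ (LaurentSeries ℂ) l * p) • geom lx l := by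
  ext1 m
  have h : (HahnSeries.single (m + 1) (1 : ℂ)) = lx ^ (m + 1) :=
    RatFunc.single_zpow (m + 1)
  rw [pbarDeltaCoeff, show -(-m - 1) = m + 1 by ring, h, ← lx_inv, Pi.smul_apply, geom,
    csmul_eq_mul, map_zpow₀, smul_eq_mul, mul_zpow,
    zpow_add_one₀ lx_ne_zero, zpow_add_one₀ (by simpa using hl)]
  have := lx_ne_zero
  field_simp

/-- Each application of `p∂` raises the order of the generalized eigenvector by one: if
`(T - λ)^j f = c • geom`, then `(T - λ)^(j+1) (p∂ f) = (j + 1) λ p̄ c • geom`. -/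
lemma isJordanChain_deltaSeq (p : LaurentSeries ℂ) (hp : p ≠ 0) (l : ℂ) (hl : l ≠ 0) :
    IsJordanChain lx l (deltaSeq p l) := by
  have hl' : algebraMap ℂ (LaurentSeries ℂ) l ≠ 0 := by simpa using hl
  have key : IsJordanChain lx l
      (fun j => ((pdEnd p) ^ j) (fun m => pbarDeltaCoeff p l (-m - 1))) := by
    intro j
    induction j with
    | zero => exact ⟨_, mul_ne_zero hl' hp, pbarDeltaCoeff_eq_geom p l hl⟩
    | succ j ih =>
      obtain ⟨c, hc, h⟩ := ih
      have h0 : ((shiftSub (LaurentSeries ℂ) lx l) ^ (j + 1))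
          (((pdEnd p) ^ j) (fun m => pbarDeltaCoeff p l (-m - 1))) = 0 := by
        have := shiftSub_pow_smul lx l 1 c (geom lx l)
        rw [pow_one] at this
        rw [pow_succ', Module.End.mul_apply, h, this, shiftSub_geom lx lx_ne_zero l hl, smul_zero]
      refine ⟨(j + 1) * (lx⁻¹ * p) * (algebraMap ℂ (LaurentSeries ℂ) l * c), ?_, ?_⟩
      · have : ((j : LaurentSeries ℂ) + 1) ≠ 0 := by
          have : (algebraMap ℂ (LaurentSeries ℂ) ((j : ℂ) + 1)) ≠ 0 := by
            rw [map_ne_zero_iff _ (algebraMap ℂ (LaurentSeries ℂ)).injective]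
            exact Nat.cast_add_one_ne_zero j
          simpa using this
        exact mul_ne_zero (mul_ne_zero this (mul_ne_zero (inv_ne_zero lx_ne_zero) hp))
          (mul_ne_zero hl' hc)
      · beta_reduce at h ⊢
        rw [pow_succ' (pdEnd p), Module.End.mul_apply, shiftSub_pow_pdEnd, h0, h, map_zero,
          zero_add, zero_add]
        ext1 m
        simp only [Pi.smul_apply, smul_eq_mul, csmul_eq_mul]
        ring
  intro j
  obtain ⟨c, hc, h⟩ := key j
  have hj : (algebraMap ℂ (LaurentSeries ℂ) (j.factorial : ℂ)⁻¹) ≠ 0 := by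
    rw [map_ne_zero_iff _ (algebraMap ℂ (LaurentSeries ℂ)).injective]
    exact inv_ne_zero (by exact_mod_cast j.factorial_ne_zero)
  refine ⟨_, mul_ne_zero hj hc, ?_⟩
  rw [deltaSeq_eq, map_smul, h]
  ext1 m
  simp only [Pi.smul_apply, smul_eq_mul, csmul_eq_mul]
  ring

end Jordan

/-! ### Fields as linear maps into `W((z))` -/

section Fields

variable {W : Type*} [AddCommGroup W] [Module ℂ W]

/-- Fields on `W`, viewed as linear maps `W → W((z))`; this is a vector space over `ℂ((z))`. -/
abbrev FieldSpace (W : Type*) [AddCommGroup W] [Module ℂ W] := W →ₗ[ℂ] HahnModule ℤ ℂ W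

/-- The linear map `w ↦ Σ aₙw z^{-n-1}` attached to a field. -/
def toSeries (A : ℤ → Module.End ℂ W) (hA : IsFieldOn W A) : FieldSpace W where
  toFun w := HahnModule.of ℂ (HahnSeries.ofSuppBddBelow (fun s => A (-s - 1) w) (by
    obtain ⟨N, hN⟩ := hA w
    refine ⟨-N, fun s hs => ?_⟩
    by_contra h
    exact hs (hN _ (by omega))))
  map_add' v w := by ext s; simp [HahnSeries.ofSuppBddBelow]
  map_smul' c w := by ext s; simp [HahnSeries.ofSuppBddBelow]; rfl

/-- The `n`-th mode of an element of `FieldSpace W`: the coefficient of `z^{-n-1}`. -/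
def mode (x : FieldSpace W) (n : ℤ) : Module.End ℂ W where
  toFun w := ((HahnModule.of ℂ).symm (x w)).coeff (-n - 1)
  map_add' v w := by simp
  map_smul' c w := by rw [map_smul]; rfl

lemma mode_toSeries (A : ℤ → Module.End ℂ W) (hA : IsFieldOn W A) : mode (toSeries A hA) = A := by
  ext n w
  show A (-(-n - 1) - 1) w = A n w
  congr 2
  ring

lemma mode_injective : Function.Injective (mode : FieldSpace W → ℤ → Module.End ℂ W) := by
  intro x y h
  ext w s
  have := congrArg (fun B : Module.End ℂ W => B w) (congrFun h (-s - 1))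
  simpa [mode] using this

lemma isFieldOn_mode (x : FieldSpace W) : IsFieldOn W (mode x) := by
  intro w
  refine ⟨-((HahnModule.of ℂ).symm (x w)).order, fun n hn => ?_⟩
  exact HahnSeries.coeff_eq_zero_of_lt_order (by omega)

lemma mode_sum {ι : Type*} (s : Finset ι) (x : ι → FieldSpace W) (n : ℤ) :
    mode (∑ i ∈ s, x i) n = ∑ i ∈ s, mode (x i) n := by
  let φ : FieldSpace W →+ Module.End ℂ W :=
    { toFun := fun x => mode x n
      map_zero' := by ext w; simp [mode]
      map_add' := fun x y => by ext w; simp [mode] }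
  exact map_sum φ x s

lemma mode_csmul (c : ℂ) (x : FieldSpace W) (n : ℤ) : mode (c • x) n = c • mode x n := rfl

/-- The `ℂ((z))`-action on fields is the convolution of coefficients. -/
lemma mode_smul (f : LaurentSeries ℂ) (x : FieldSpace W) (n : ℤ) (w : W) :
    mode (f • x) n w = ∑ᶠ s : ℤ, f.coeff s • mode x (n + s) w := by
  have h : mode (f • x) n w = ((HahnModule.of ℂ).symm (f • x w)).coeff (-n - 1) := rfl
  rw [h, HahnModule.coeff_smul]
  set S := Finset.VAddAntidiagonal (-n - 1)
    (Set.VAddAntidiagonal.finite_of_isPWO f.isPWO_support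
      ((HahnModule.of ℂ).symm (x w)).isPWO_support (-n - 1)) with hS
  have hmem (q : ℤ × ℤ) : q ∈ S ↔ f.coeff q.1 ≠ 0 ∧
      ((HahnModule.of ℂ).symm (x w)).coeff q.2 ≠ 0 ∧ q.1 + q.2 = -n - 1 := by
    simp [hS, Finset.mem_vaddAntidiagonal]
  have hsnd (s t : ℤ) (h : s + t = -n - 1) :
      ((HahnModule.of ℂ).symm (x w)).coeff t = mode x (n + s) w := by
    show _ = ((HahnModule.of ℂ).symm (x w)).coeff (-(n + s) - 1)
    congr 1
    omega
  rw [finsum_eq_sum_of_support_subset (s := S.image Prod.fst), Finset.sum_image]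
  · refine Finset.sum_congr rfl fun q hq => ?_
    rw [hsnd q.1 q.2 ((hmem q).1 hq).2.2]
  · intro q hq q' hq' h
    have h1 := ((hmem q).1 hq).2.2
    have h2 := ((hmem q').1 hq').2.2
    exact Prod.ext h (by omega)
  · intro s hs
    rw [Function.mem_support] at hs
    rw [Finset.coe_image]
    refine ⟨(s, -n - 1 - s), (hmem _).2 ⟨?_, ?_, by ring⟩, rfl⟩
    · intro h0; apply hs; rw [h0, zero_smul]
    · intro h0; apply hs; rw [← hsnd s (-n - 1 - s) (by ring)]
      exact (congrArg _ h0).trans (smul_zero _)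

lemma mode_lx_inv_smul (x : FieldSpace W) (n : ℤ) : mode (lx⁻¹ • x) n = mode x (n - 1) := by
  ext w
  rw [mode_smul, finsum_eq_single _ (-1), lx_inv, HahnSeries.coeff_single_same, one_smul]
  · rfl
  · intro s hs
    rw [lx_inv, HahnSeries.coeff_single_of_ne hs, zero_smul]

lemma mode_twShift_pow (t : ℕ) (D : ℤ → FieldSpace W) (m n : ℤ) :
    mode (((twShift (FieldSpace W) lx) ^ t) D m) n = mode (D (m + t)) (n - t) := by
  induction t generalizing D m n with
  | zero => simp
  | succ t ih =>
    rw [pow_succ, Module.End.mul_apply, ih, twShift_apply, mode_lx_inv_smul]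
    push_cast
    rw [show m + (t : ℤ) + 1 = m + (t + 1) by ring, show n - (t : ℤ) - 1 = n - (t + 1) by ring]

lemma isFieldOn_commutator (a b : ℤ → Module.End ℂ W) (hb : IsFieldOn W b) (m : ℤ) :
    IsFieldOn W (fun n => a m * b n - b n * a m) := by
  intro w
  obtain ⟨N, hN⟩ := hb w
  obtain ⟨N', hN'⟩ := hb (a m w)
  refine ⟨max N N', fun n hn => ?_⟩
  simp [hN n (le_trans (le_max_left _ _) hn), hN' n (le_trans (le_max_right _ _) hn)]

/-- The commutator `[a(z₁), b(z₂)]` as the sequence of its `z₁^{-m-1}`-coefficients. -/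
def commSeq (a b : ℤ → Module.End ℂ W) (hb : IsFieldOn W b) : ℤ → FieldSpace W :=
  fun m => toSeries _ (isFieldOn_commutator a b hb m)

lemma mode_commSeq (a b : ℤ → Module.End ℂ W) (hb : IsFieldOn W b) (m n : ℤ) :
    mode (commSeq a b hb m) n = a m * b n - b n * a m := by
  rw [commSeq, mode_toSeries]

lemma eq_of_mode {x y : ℤ → FieldSpace W} (h : ∀ m n, mode (x m) n = mode (y m) n) : x = y :=
  funext fun m => mode_injective (funext (h m))

/-- The locality condition `q(z₁/z₂)[a(z₁), b(z₂)] = 0` says that `q(T)` kills the commutator. -/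
lemma locality_iff (a b : ℤ → Module.End ℂ W) (hb : IsFieldOn W b) (q : Polynomial ℂ) :
    (∀ m n : ℤ, ∑ t ∈ Finset.range (q.natDegree + 1),
        q.coeff t • (a (m + t) * b (n - t) - b (n - t) * a (m + t)) = 0) ↔
      Polynomial.aeval (twShift (FieldSpace W) lx) q (commSeq a b hb) = 0 := by
  have key (m n : ℤ) : mode (Polynomial.aeval (twShift (FieldSpace W) lx) q (commSeq a b hb) m) n =
      ∑ t ∈ Finset.range (q.natDegree + 1),
        q.coeff t • (a (m + t) * b (n - t) - b (n - t) * a (m + t)) := by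
    rw [Polynomial.aeval_eq_sum_range, LinearMap.sum_apply, Finset.sum_apply, mode_sum]
    refine Finset.sum_congr rfl fun t _ => ?_
    rw [LinearMap.smul_apply, Pi.smul_apply, mode_csmul, mode_twShift_pow, mode_commSeq]
  have hz (n : ℤ) : mode (0 : FieldSpace W) n = 0 := by ext w; simp [mode]
  constructor
  · intro h
    refine eq_of_mode fun m n => ?_
    rw [key, h, Pi.zero_apply, hz]
  · intro h m n
    rw [← key, h, Pi.zero_apply, hz]

/-- The coefficientwise identity, as an equation between sequences in `FieldSpace W`. -/
lemma commutatorIdentity_iff (p : LaurentSeries ℂ) (r : ℕ) (lam : Fin r → ℂ) (k : Fin r → ℕ)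
    (a b : ℤ → Module.End ℂ W) (hb : IsFieldOn W b) (A : Fin r → ℕ → FieldSpace W) :
    CommutatorIdentity W p r lam k a b (fun i j => mode (A i j)) ↔
      commSeq a b hb =
        ∑ i : Fin r, ∑ j ∈ Finset.range (k i), outer (deltaSeq p (lam i) j) (A i j) := by
  have key (m n : ℤ) (w : W) :
      mode ((∑ i : Fin r, ∑ j ∈ Finset.range (k i), outer (deltaSeq p (lam i) j) (A i j)) m) n w =
      ∑ i : Fin r, ∑ j ∈ Finset.range (k i),
          ∑ᶠ s : ℤ, ((pdPow p j (pbarDeltaCoeff p (lam i) (-m - 1))).coeff s) •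
            (mode (A i j) (n + s)) w := by
    rw [Finset.sum_apply, mode_sum, LinearMap.sum_apply]
    refine Finset.sum_congr rfl fun i _ => ?_
    rw [Finset.sum_apply, mode_sum, LinearMap.sum_apply]
    refine Finset.sum_congr rfl fun j _ => ?_
    exact mode_smul _ _ _ _
  constructor
  · intro h
    refine eq_of_mode fun m n => ?_
    ext w
    rw [key, mode_commSeq, h m n w]
  · intro h m n w
    rw [← mode_commSeq a b hb, h, key]

end Fields

/-! ### The expansion theorem -/

/-- Lemma 2.4: for fields `a(z), b(z)` on `W` and
`q(z) = Π(z−λᵢ)^{kᵢ}` with `λᵢ` distinct and nonzero, one has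
`q(z₁/z₂)[a(z₁),b(z₂)] = 0` (coefficientwise) if and only if there exist fields
`A_{ij}(z)` with `[a(z₁),b(z₂)] = Σᵢⱼ A_{ij}(z₂)(p∂₂)^{(j)}[p̄(λᵢ⁻¹z₁)δ(λᵢz₂/z₁)]`;
moreover, the `A_{ij}` are uniquely determined. -/
theorem quasi_local_commutator_expansion
    (p : LaurentSeries ℂ) (hp : p ≠ 0)
    (W : Type*) [AddCommGroup W] [Module ℂ W]
    (a b : ℤ → Module.End ℂ W) (ha : IsFieldOn W a) (hb : IsFieldOn W b)
    (r : ℕ) (lam : Fin r → ℂ) (hne : ∀ i, lam i ≠ 0) (hinj : Function.Injective lam)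
    (k : Fin r → ℕ) (hk : ∀ i, 0 < k i) :
    ((∀ m n : ℤ,
        ∑ t ∈ Finset.range ((qpoly r lam k).natDegree + 1),
          (qpoly r lam k).coeff t • (a (m + t) * b (n - t) - b (n - t) * a (m + t)) = 0)
      ↔ ∃ A : Fin r → ℕ → ℤ → Module.End ℂ W,
          (∀ i j, IsFieldOn W (A i j)) ∧ CommutatorIdentity W p r lam k a b A) ∧
    (∀ A A' : Fin r → ℕ → ℤ → Module.End ℂ W,
        (∀ i j, IsFieldOn W (A i j)) → (∀ i j, IsFieldOn W (A' i j)) →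
        CommutatorIdentity W p r lam k a b A → CommutatorIdentity W p r lam k a b A' →
        ∀ i : Fin r, ∀ j < k i, A i j = A' i j) := by
  have hJ (i) := isJordanChain_deltaSeq p hp (lam i) (hne i)
  have hT (i) : shiftSub (FieldSpace W) lx (lam i) = twShift (FieldSpace W) lx - lam i • 1 := rfl
  -- Any family of fields consists of the modes of elements of `FieldSpace W`.
  have lift (A : Fin r → ℕ → ℤ → Module.End ℂ W) (hA : ∀ i j, IsFieldOn W (A i j)) :
      A = fun i j => mode (toSeries (A i j) (hA i j)) := by
    funext i j
    rw [mode_toSeries]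
  refine ⟨?_, ?_⟩
  · rw [locality_iff a b hb]
    constructor
    · intro h
      obtain ⟨g, hg, hsum⟩ := exists_primary_sum _ Finset.univ lam hinj k _ h
      choose A hA using fun i => (hJ i).exists_expansion lx_ne_zero (hne i) (k i) (g i) (hg i)
      refine ⟨fun i j => mode (A i j), fun i j => isFieldOn_mode _, ?_⟩
      rw [commutatorIdentity_iff p r lam k a b hb, hsum]
      exact Finset.sum_congr rfl fun i _ => hA i
    · rintro ⟨A, hA, h⟩
      rw [lift A hA, commutatorIdentity_iff p r lam k a b hb] at h
      rw [h]
      exact aeval_primary_sum _ Finset.univ lam k _ fun i =>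
        (hJ i).pow_sum_eq_zero lx_ne_zero (hne i) (k i) fun j => toSeries (A i j) (hA i j)
  · intro A A' hA hA' h h' i j hj
    rw [lift A hA, commutatorIdentity_iff p r lam k a b hb] at h
    rw [lift A' hA', commutatorIdentity_iff p r lam k a b hb] at h'
    set B : Fin r → ℕ → FieldSpace W := fun i j =>
      toSeries (A i j) (hA i j) - toSeries (A' i j) (hA' i j)
    have hB : ∑ i : Fin r, ∑ j ∈ Finset.range (k i), outer (deltaSeq p (lam i) j) (B i j) = 0 := by
      rw [← sub_eq_zero.2 (h.symm.trans h'), ← Finset.sum_sub_distrib]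
      refine Finset.sum_congr rfl fun i _ => ?_
      rw [← Finset.sum_sub_distrib]
      refine Finset.sum_congr rfl fun j _ => ?_
      ext1 m
      exact smul_sub _ _ _
    have hi := primary_sum_eq_zero (twShift (FieldSpace W) lx) Finset.univ lam hinj k _
      (fun i => (hJ i).pow_sum_eq_zero lx_ne_zero (hne i) (k i) (B i)) hB i (Finset.mem_univ i)
    have hz := (hJ i).eq_zero lx_ne_zero (hne i) (k i) (B i) hi j hj
    rw [← mode_toSeries (A i j) (hA i j), sub_eq_zero.1 hz, mode_toSeries]
end
end

section
/- For all f, g ∈ ℂ((x)) and any nonzero p ∈ ℂ((x)), the following residue identity holds: Res_x( ((p′)²f′ + pp″f′ + 3pp′f″ + p²f‴)·g ) + (1/2)·Res_x( (pf′g − pfg′)·(2p″ − p^{−1}(p′)²) ) = Res_x( (p‴f + 3p″f′ + 3p′f″ + pf‴)·p·g ). -/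
/-!
The two sides differ by the residue of an exact derivative: after cancelling `p * p⁻¹`, the difference
of the two integrands is `((1/2 (p')² - p p'') f g)'`, and the residue of a derivative vanishes
(`lres_lder`). The formal input is the Leibniz rule `lder_mul`, which is obtained from the Euler
operator `x d/dx`: it multiplies the coefficient of `x ^ n` by `n`, so its Leibniz rule is the
additivity of exponents, and `d/dx` is its product with `x⁻¹`.
-/

noncomputable section

open HahnSeries

/-- The Euler operator `x d/dx` on `ℂ((x))`. -/
def leuler (f : LaurentSeries ℂ) : LaurentSeries ℂ where
  coeff n := (n : ℂ) * f.coeff n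
  isPWO_support' := f.isPWO_support.mono fun n hn h => hn (by simp [h])

lemma leuler_support (f : LaurentSeries ℂ) : (leuler f).support ⊆ f.support :=
  fun n hn h => hn (by simp [leuler, h])

lemma leuler_mul (f g : LaurentSeries ℂ) : leuler (f * g) = leuler f * g + f * leuler g := by
  ext n
  -- All three products are summed over the antidiagonal of the supports of `f` and `g`.
  rw [coeff_add, coeff_mul_left' f.isPWO_support (leuler_support f),
    coeff_mul_right' g.isPWO_support (leuler_support g)]
  change (n : ℂ) * (f * g).coeff n = _
  rw [coeff_mul, Finset.mul_sum, ← Finset.sum_add_distrib]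
  refine Finset.sum_congr rfl fun ij hij => ?_
  rw [← (Finset.mem_antidiagonal.mp hij).2.2]
  simp only [leuler]
  push_cast
  ring

lemma lder_eq (f : LaurentSeries ℂ) : lder f = single (-1 : ℤ) (1 : ℂ) * leuler f := by
  ext n
  have h := coeff_single_mul_add (r := (1 : ℂ)) (x := leuler f) (a := n + 1) (b := (-1 : ℤ))
  rw [add_neg_cancel_right] at h
  rw [h, one_mul]
  rfl

lemma lder_mul (f g : LaurentSeries ℂ) : lder (f * g) = lder f * g + f * lder g := by
  simp only [lder_eq, leuler_mul]
  ring

lemma lder_sub (f g : LaurentSeries ℂ) : lder (f - g) = lder f - lder g := by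
  ext n
  simp only [lder, coeff_sub]
  ring

lemma lres_lder (f : LaurentSeries ℂ) : lres (lder f) = 0 := by
  simp [lres, lder]

lemma lres_add (f g : LaurentSeries ℂ) : lres (f + g) = lres f + lres g := by
  simp [lres]

lemma lres_two_mul (f : LaurentSeries ℂ) : lres (2 * f) = 2 * lres f := by
  rw [two_mul, lres_add, two_mul]

/-- the central-term residue identity behind Lemma 6.5:
`Res(((p′)²f′ + pp″f′ + 3pp′f″ + p²f‴)g) + (1/2)Res((pf′g − pfg′)(2p″ − p⁻¹(p′)²))
  = Res((p‴f + 3p″f′ + 3p′f″ + pf‴)·p·g)`. -/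
theorem residue_identity_virasoro (p : LaurentSeries ℂ) (hp : p ≠ 0)
    (f g : LaurentSeries ℂ) :
    lres ((((lder p) ^ 2) * lder f + p * lder (lder p) * lder f
        + 3 * (p * lder p * lder (lder f)) + p ^ 2 * lder (lder (lder f))) * g)
      + (1 / 2 : ℂ) * lres ((p * lder f * g - p * f * lder g)
          * (2 * lder (lder p) - p⁻¹ * (lder p) ^ 2))
    = lres ((lder (lder (lder p)) * f + 3 * (lder (lder p) * lder f)
        + 3 * (lder p * lder (lder f)) + p * lder (lder (lder f))) * p * g) := by
  -- Doubled, to keep the identity integral: `2 LHS - 2 RHS = Res (((p')² - 2 p p'') f g)'`.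
  have h0 := lres_lder ((lder p * lder p - (p * lder (lder p) + p * lder (lder p))) * (f * g))
  set A := (((lder p) ^ 2) * lder f + p * lder (lder p) * lder f
        + 3 * (p * lder p * lder (lder f)) + p ^ 2 * lder (lder (lder f))) * g with hA
  set B := (p * lder f * g - p * f * lder g)
          * (2 * lder (lder p) - p⁻¹ * (lder p) ^ 2) with hB
  set C := (lder (lder (lder p)) * f + 3 * (lder (lder p) * lder f)
        + 3 * (lder p * lder (lder f)) + p * lder (lder (lder f))) * p * g with hC
  have hB' : B = (lder f * g - f * lder g) * (2 * (p * lder (lder p)) - (lder p) ^ 2) := by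
    rw [hB]
    linear_combination (-(lder f * g - f * lder g) * (lder p) ^ 2) * mul_inv_cancel₀ hp
  have key : 2 * A + B = 2 * C +
      lder ((lder p * lder p - (p * lder (lder p) + p * lder (lder p))) * (f * g)) := by
    rw [hB', hA, hC]
    simp only [lder_mul, lder_sub, lder_add]
    ring
  have h := congrArg lres key
  rw [lres_add, lres_add, lres_two_mul, lres_two_mul, h0] at h
  linear_combination (1 / 2 : ℂ) * h
end
end
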